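/- Let Z₁,...,Z_p be i.i.d. standard normal random variables and define Φ_p = E[(∏_{j=1}^p Z_j²)(∏_{j=2}^p (Z_j - Z_{j-1})²)]. Then Φ_p = ((3+√15)^p - (3-√15)^p)/(2√15). -/

import Mathlib

open MeasureTheory Real

/-- The one-dimensional standard Gaussian density. -/
noncomputable def gDens (x : ℝ) : ℝ := (2 * π) ^ (-(1 : ℝ) / 2) * Real.exp (-(1 / 2) * x ^ 2)

lemma gDens_nonneg (x : ℝ) : 0 ≤ gDens x := by unfold gDens; positivity

lemma gDens_cont : Continuous gDens := by unfold gDens; fun_prop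

lemma gDens_int (k : ℕ) : Integrable (fun x : ℝ => x ^ k * gDens x) := by
  have h := integrable_rpow_mul_exp_neg_mul_sq (b := 1 / 2) (by norm_num) (s := (k : ℝ))
    (by have : (0 : ℝ) ≤ k := Nat.cast_nonneg k
        linarith)
  have h2 := h.const_mul ((2 * π) ^ (-(1 : ℝ) / 2))
  refine h2.congr (Filter.Eventually.of_forall fun x => ?_)
  simp only [Real.rpow_natCast, gDens]
  ring

lemma gDens_mom0 : ∫ x : ℝ, gDens x = 1 := by
  unfold gDens
  rw [integral_const_mul, integral_gaussian, Real.sqrt_eq_rpow,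
    show π / (1 / 2) = 2 * π by ring, ← Real.rpow_add (by positivity)]
  norm_num

lemma gDens_deriv (x : ℝ) : HasDerivAt gDens (-x * gDens x) x := by
  unfold gDens
  have h := (((hasDerivAt_pow 2 x).const_mul (-(1 / 2) : ℝ)).exp).const_mul
    ((2 * π) ^ (-(1 : ℝ) / 2))
  refine h.congr_deriv ?_
  push_cast
  ring

lemma gDens_mom1 : ∫ x : ℝ, x * gDens x = 0 := by
  have h0 := gDens_int 0
  have h1 := gDens_int 1
  simp only [pow_zero, one_mul, pow_one] at h0 h1
  have h := integral_eq_zero_of_hasDerivAt_of_integrable (fun x => gDens_deriv x)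
    (h1.neg.congr (Filter.Eventually.of_forall fun x => by simp)) h0
  simp only [neg_mul, integral_neg] at h
  linarith

lemma gDens_rec (k : ℕ) :
    ∫ x : ℝ, x ^ (k + 2) * gDens x = (k + 1) * ∫ x : ℝ, x ^ k * gDens x := by
  have hd : ∀ x, HasDerivAt (fun x => x ^ (k + 1) * gDens x)
      ((k + 1) * (x ^ k * gDens x) - x ^ (k + 2) * gDens x) x := by
    intro x
    refine ((hasDerivAt_pow (k + 1) x).mul (gDens_deriv x)).congr_deriv ?_
    have : k + 1 - 1 = k := rfl
    rw [this]
    push_cast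
    ring
  have h := integral_eq_zero_of_hasDerivAt_of_integrable hd
    (((gDens_int k).const_mul _).sub (gDens_int (k + 2))) (gDens_int (k + 1))
  rw [integral_sub ((gDens_int k).const_mul _) (gDens_int (k + 2)), integral_const_mul] at h
  linarith

lemma gDens_m0 : ∫ x : ℝ, x ^ 0 * gDens x = 1 := by simpa using gDens_mom0
lemma gDens_m1 : ∫ x : ℝ, x ^ 1 * gDens x = 0 := by simpa using gDens_mom1
lemma gDens_m2 : ∫ x : ℝ, x ^ 2 * gDens x = 1 := by
  have := gDens_rec 0; rw [gDens_m0] at this; simpa using this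
lemma gDens_m3 : ∫ x : ℝ, x ^ 3 * gDens x = 0 := by
  have := gDens_rec 1; rw [gDens_m1] at this; simpa using this
lemma gDens_m4 : ∫ x : ℝ, x ^ 4 * gDens x = 3 := by
  have := gDens_rec 2; rw [gDens_m2] at this; norm_num at this; exact this
lemma gDens_m5 : ∫ x : ℝ, x ^ 5 * gDens x = 0 := by
  have := gDens_rec 3; rw [gDens_m3] at this; simpa using this
lemma gDens_m6 : ∫ x : ℝ, x ^ 6 * gDens x = 15 := by
  have := gDens_rec 4; rw [gDens_m4] at this; norm_num at this; exact this

/-- One step of the transfer operator. -/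
lemma gDens_step (a b y : ℝ) :
    Integrable (fun x : ℝ => (a + b * x ^ 2) * (x ^ 2 * (y - x) ^ 2) * gDens x) ∧
    ∫ x : ℝ, (a + b * x ^ 2) * (x ^ 2 * (y - x) ^ 2) * gDens x
      = (3 * a + 15 * b) + (a + 3 * b) * y ^ 2 := by
  have e : (fun x : ℝ => (a + b * x ^ 2) * (x ^ 2 * (y - x) ^ 2) * gDens x) =
      fun x => (a * y ^ 2) * (x ^ 2 * gDens x) + ((-2 * a * y) * (x ^ 3 * gDens x)
        + ((a + b * y ^ 2) * (x ^ 4 * gDens x) + ((-2 * b * y) * (x ^ 5 * gDens x)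
        + b * (x ^ 6 * gDens x)))) := by
    funext x; ring
  have i2 := (gDens_int 2).const_mul (a * y ^ 2)
  have i3 := (gDens_int 3).const_mul (-2 * a * y)
  have i4 := (gDens_int 4).const_mul (a + b * y ^ 2)
  have i5 := (gDens_int 5).const_mul (-2 * b * y)
  have i6 := (gDens_int 6).const_mul b
  rw [e]
  refine ⟨i2.add (i3.add (i4.add (i5.add i6))), ?_⟩
  refine (integral_add i2 (i3.add (i4.add (i5.add i6)))).trans ?_
  rw [integral_add' i3 (i4.add (i5.add i6)), integral_add' i4 (i5.add i6), integral_add' i5 i6]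
  simp only [integral_const_mul, gDens_m2, gDens_m3, gDens_m4, gDens_m5, gDens_m6]
  ring

/-- The weight. -/
noncomputable def fW (n : ℕ) (z : Fin (n + 1) → ℝ) : ℝ :=
  ((∏ j, (z j) ^ 2) * ∏ j : Fin n, (z j.succ - z j.castSucc) ^ 2) * ∏ j, gDens (z j)

lemma fW_nonneg (n : ℕ) (z : Fin (n + 1) → ℝ) : 0 ≤ fW n z := by
  unfold fW
  refine mul_nonneg (mul_nonneg ?_ ?_) ?_
  · exact Finset.prod_nonneg fun j _ => sq_nonneg _
  · exact Finset.prod_nonneg fun j _ => sq_nonneg _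
  · exact Finset.prod_nonneg fun j _ => gDens_nonneg _

lemma fW_cont (n : ℕ) : Continuous (fW n) := by
  have := gDens_cont
  unfold fW
  fun_prop

lemma fW_cons (n : ℕ) (x : ℝ) (y : Fin (n + 1) → ℝ) :
    fW (n + 1) (Fin.cons x y) = (x ^ 2 * (y 0 - x) ^ 2 * gDens x) * fW n y := by
  set z : Fin (n + 2) → ℝ := Fin.cons x y with hz
  have z0 : z 0 = x := rfl
  have zs : ∀ j, z (Fin.succ j) = y j := fun j => rfl
  have e1 : ∏ j, z j ^ 2 = x ^ 2 * ∏ j, y j ^ 2 := by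
    rw [Fin.prod_univ_succ, z0]; simp only [zs]
  have e2 : ∏ j, gDens (z j) = gDens x * ∏ j, gDens (y j) := by
    rw [Fin.prod_univ_succ, z0]; simp only [zs]
  have e3 : ∏ j : Fin (n + 1), (z j.succ - z j.castSucc) ^ 2 =
      (y 0 - x) ^ 2 * ∏ j : Fin n, (y j.succ - y j.castSucc) ^ 2 := by
    rw [Fin.prod_univ_succ]
    simp only [Fin.castSucc_zero, Fin.castSucc_succ, zs, z0]
  unfold fW
  rw [e1, e2, e3]
  ring

/-- The value of the iterated recursion. -/
noncomputable def fU : ℕ → ℝ → ℝ → ℝ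
  | 0, a, b => a + 3 * b
  | n + 1, a, b => fU n (3 * a + 15 * b) (a + 3 * b)

lemma fMain (n : ℕ) : ∀ a b : ℝ, 0 ≤ a → 0 ≤ b →
    Integrable (fun z : Fin (n + 1) → ℝ => (a + b * z 0 ^ 2) * fW n z) ∧
    ∫ z : Fin (n + 1) → ℝ, (a + b * z 0 ^ 2) * fW n z = fU n a b := by
  induction n with
  | zero =>
    intro a b _ _
    have mp := volume_preserving_funUnique (Fin 1) ℝ
    have e : (fun z : Fin 1 → ℝ => (a + b * z 0 ^ 2) * fW 0 z) =
        (fun x : ℝ => a * (x ^ 2 * gDens x) + b * (x ^ 4 * gDens x)) ∘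
          (MeasurableEquiv.funUnique (Fin 1) ℝ) := by
      funext z
      simp [fW, MeasurableEquiv.funUnique]
      ring
    have i2 := (gDens_int 2).const_mul a
    have i4 := (gDens_int 4).const_mul b
    constructor
    · show Integrable (fun z : Fin 1 → ℝ => (a + b * z 0 ^ 2) * fW 0 z)
      rw [e]
      exact (mp.integrable_comp_emb (MeasurableEquiv.measurableEmbedding _)).2 (i2.add i4)
    · show ∫ z : Fin 1 → ℝ, (fun z : Fin 1 → ℝ => (a + b * z 0 ^ 2) * fW 0 z) z = _
      rw [e]
      refine (mp.integral_comp (MeasurableEquiv.measurableEmbedding _)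
        (fun x : ℝ => a * (x ^ 2 * gDens x) + b * (x ^ 4 * gDens x))).trans ?_
      rw [integral_add i2 i4]
      simp only [integral_const_mul, gDens_m2, gDens_m4, fU]
      ring
  | succ n ih =>
    intro a b ha hb
    obtain ⟨ihi, ihv⟩ := ih (3 * a + 15 * b) (a + 3 * b) (by positivity) (by positivity)
    have mp := (volume_preserving_piFinSuccAbove (fun _ : Fin (n + 2) => ℝ) 0).symm
    set F : (Fin (n + 2) → ℝ) → ℝ := fun z => (a + b * z 0 ^ 2) * fW (n + 1) z with hF
    have hFc : Continuous F := by
      have := fW_cont (n + 1)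
      fun_prop
    set G : ℝ × (Fin (n + 1) → ℝ) → ℝ := fun p => F (Fin.cons p.1 p.2) with hG
    have hGc : Continuous G := by
      refine hFc.comp (continuous_pi fun i => ?_)
      refine Fin.cases ?_ (fun j => ?_) i
      · simpa using continuous_fst
      · simp only [Fin.cons_succ]; fun_prop
    have hGn : ∀ p, 0 ≤ G p := fun p => mul_nonneg (by positivity) (fW_nonneg _ _)
    have hGv : ∀ x y, G (x, y) =
        (a + b * x ^ 2) * (x ^ 2 * (y 0 - x) ^ 2) * gDens x * fW n y := by
      intro x y
      simp only [hG, hF, fW_cons, Fin.cons_zero]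
      ring
    have hGi : ∀ y, ∫ x, G (x, y) =
        ((3 * a + 15 * b) + (a + 3 * b) * y 0 ^ 2) * fW n y := by
      intro y
      simp only [hGv]
      rw [integral_mul_const, (gDens_step a b (y 0)).2]
    have hGint : Integrable G ((volume : Measure ℝ).prod (volume : Measure (Fin (n + 1) → ℝ))) := by
      rw [integrable_prod_iff' hGc.aestronglyMeasurable]
      constructor
      · refine Filter.Eventually.of_forall fun y => ?_
        simp only [hGv]
        exact (gDens_step a b (y 0)).1.mul_const _
      · simp only [Real.norm_of_nonneg (hGn _), hGi]
        exact ihi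
    have hcomp : F ∘ (MeasurableEquiv.piFinSuccAbove (fun _ : Fin (n + 2) => ℝ) 0).symm = G := by
      funext p
      simp [hG, MeasurableEquiv.piFinSuccAbove, Fin.insertNthEquiv]
    constructor
    · rw [← mp.integrable_comp_emb (MeasurableEquiv.measurableEmbedding _), hcomp]
      exact hGint
    · rw [← mp.integral_comp (MeasurableEquiv.measurableEmbedding _) F]
      show ∫ p, (F ∘ (MeasurableEquiv.piFinSuccAbove (fun _ : Fin (n + 2) => ℝ) 0).symm) p = _
      rw [hcomp]
      refine (integral_prod_symm G hGint).trans ?_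
      simp only [hGi]
      exact ihv

lemma fU_closed (n : ℕ) : ∀ a b : ℝ, fU n a b =
    ((a + b * Real.sqrt 15) * (3 + Real.sqrt 15) ^ (n + 1)
      - (a - b * Real.sqrt 15) * (3 - Real.sqrt 15) ^ (n + 1)) / (2 * Real.sqrt 15) := by
  have hs : Real.sqrt 15 ^ 2 = 15 := Real.sq_sqrt (by norm_num)
  have h0 : Real.sqrt 15 ≠ 0 := by positivity
  induction n with
  | zero =>
    intro a b
    simp only [fU]
    field_simp
    ring
  | succ n ih =>
    intro a b
    simp only [fU]
    rw [ih]
    congr 1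
    generalize Real.sqrt 15 = s at *
    rw [pow_succ (3 + s) (n + 1), pow_succ (3 - s) (n + 1)]
    linear_combination (-b * (3 + s) ^ (n + 1) + b * (3 - s) ^ (n + 1)) * hs

/-- For i.i.d. standard normals Z₁,...,Z_p (p = n+1 ≥ 1),
Φ_p = E[(∏ Z_j²)(∏ (Z_j - Z_{j-1})²)] = ((3+√15)^p - (3-√15)^p)/(2√15).
The expectation is written as an integral against the standard Gaussian density
on ℝ^p. -/
theorem fusion_pMOM_moment_closed_form (n : ℕ) :
    (∫ z : Fin (n + 1) → ℝ,
        ((∏ j, (z j) ^ 2) * ∏ j : Fin n, (z j.succ - z j.castSucc) ^ 2) *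
          ((2 * π) ^ (-((n : ℝ) + 1) / 2) * Real.exp (-(∑ j, (z j) ^ 2) / 2))) =
      ((3 + Real.sqrt 15) ^ (n + 1) - (3 - Real.sqrt 15) ^ (n + 1)) /
        (2 * Real.sqrt 15) := by
  have h := (fMain n 1 0 zero_le_one le_rfl).2
  rw [fU_closed] at h
  simp only [zero_mul, add_zero, sub_zero, one_mul] at h
  rw [← h]
  congr 1
  funext z
  unfold fW
  congr 1
  unfold gDens
  rw [Finset.prod_mul_distrib, ← Real.exp_sum, ← Finset.mul_sum, Finset.prod_const,
    Finset.card_univ, Fintype.card_fin, ← Real.rpow_natCast, ← Real.rpow_mul (by positivity)]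
  congr 2
  · push_cast; ring
  · ring
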